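/- Let H be a Hopf algebra over K, and equip H ⊗ H with the multiplication (h¹ # h²)(h³ # h⁴) = ∑ h¹ h²₍₁₎ h³ S(h²₍₂₎) # h²₍₃₎ h⁴. Then the map P_L(h # h') = ∑ S(h₍₂₎h'₍₂₎)·h₍₃₎ # S(h₍₁₎h'₍₁₎)h'₍₃₎, where x·y = ∑ x₍₁₎ y S(x₍₂₎) is the adjoint action (equivalently P_L(h # h') = ∑ S(h₍₃₎h'₍₃₎) h₍₄₎ S²(h₍₂₎h'₍₂₎) # S(h₍₁₎h'₍₁₎)h'₍₄₎), is an idempotent Rota-Baxter operator of weight -1 on this algebra. -/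

import Mathlib

/-!
STATEMENT 17: For a Hopf algebra `H`, equip `H ⊗ H` with the smash product
multiplication arising from the adjoint action,
`(h¹ # h²)(h³ # h⁴) = ∑ h¹ h²₍₁₎ h³ S(h²₍₂₎) # h²₍₃₎ h⁴`.
Then `P_L(h # h') = ∑ S(h₍₂₎h'₍₂₎)·h₍₃₎ # S(h₍₁₎h'₍₁₎)h'₍₃₎` (where `·` is the adjoint
action) is an idempotent Rota-Baxter operator of weight `-1` on this algebra.
`P_L` is built Sweedler-free from the iterated comultiplications of `h` and `h'`:
it is the specialization to `(V, ρ, act) = (H, Δ, adjoint action)` of the map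
`v # h ↦ ∑ S(v₍₋₁₎h₍₂₎)·v₍₀₎ # S(v₍₋₂₎h₍₁₎)h₍₃₎`.
-/

open TensorProduct Coalgebra HopfAlgebra LinearMap

/-- The adjoint action of a Hopf algebra on itself, `x · h = ∑ x₍₁₎ h S(x₍₂₎)`,
as a linear map `H ⊗ H →ₗ H`. -/
noncomputable def adjointAction (K : Type*) [Field K]
    (H : Type*) [Ring H] [HopfAlgebra K H] :
    H ⊗[K] H →ₗ[K] H :=
  (LinearMap.mul' K H) ∘ₗ
  (LinearMap.lTensor H (LinearMap.mul' K H)) ∘ₗ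
  (LinearMap.lTensor H (LinearMap.lTensor H (antipode (R := K) (A := H)))) ∘ₗ
  (LinearMap.lTensor H (TensorProduct.comm K H H).toLinearMap) ∘ₗ
  (TensorProduct.assoc K H H H).toLinearMap ∘ₗ
  (LinearMap.rTensor H (Coalgebra.comul (R := K) (A := H)))

/-- The smash product multiplication on `H ⊗ H` arising from the adjoint action:
`(h¹ # h²)(h³ # h⁴) = ∑ h¹ h²₍₁₎ h³ S(h²₍₂₎) # h²₍₃₎ h⁴`. -/
noncomputable def adSmashMul (K : Type*) [Field K]
    (H : Type*) [Ring H] [HopfAlgebra K H] :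
    (H ⊗[K] H) ⊗[K] (H ⊗[K] H) →ₗ[K] H ⊗[K] H :=
  (LinearMap.rTensor H (LinearMap.mul' K H)) ∘ₗ
  (TensorProduct.assoc K H H H).symm.toLinearMap ∘ₗ
  (LinearMap.lTensor H (TensorProduct.map (adjointAction K H) (LinearMap.mul' K H))) ∘ₗ
  (LinearMap.lTensor H (TensorProduct.tensorTensorTensorComm K H H H H).toLinearMap) ∘ₗ
  (TensorProduct.assoc K H (H ⊗[K] H) (H ⊗[K] H)).toLinearMap ∘ₗ
  (LinearMap.rTensor (H ⊗[K] H) (LinearMap.lTensor H (Coalgebra.comul (R := K) (A := H))))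

namespace PLAux

open WithConv

variable {K : Type*} [Field K] {H : Type*} [Ring H] [HopfAlgebra K H]

/-- The antipode is a left convolution inverse after composing with an algebra map. -/
lemma antipode_conv {A : Type*} [Ring A] [Algebra K A] (f : H →ₐ[K] A) :
    toConv (f.toLinearMap ∘ₗ antipode K) * toConv f.toLinearMap = 1 := by
  ext x
  have h3 := congrArg f (sum_antipode_mul_eq_algebraMap_counit (ℛ K x))
  simp only [map_sum, map_mul, AlgHom.commutes] at h3
  simp only [LinearMap.convMul_apply, LinearMap.convOne_apply]
  rw [← h3, ← (ℛ K x).eq]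
  simp

lemma conv_antipode {A : Type*} [Ring A] [Algebra K A] (f : H →ₐ[K] A) :
    toConv f.toLinearMap * toConv (f.toLinearMap ∘ₗ antipode K) = 1 := by
  ext x
  have h3 := congrArg f (sum_mul_antipode_eq_algebraMap_counit (ℛ K x))
  simp only [map_sum, map_mul, AlgHom.commutes] at h3
  simp only [LinearMap.convMul_apply, LinearMap.convOne_apply]
  rw [← h3, ← (ℛ K x).eq]
  simp

variable (K H) in
/-- `h ↦ h ⊗ 1`. -/
noncomputable def i1 : H →ₐ[K] H ⊗[K] H := Algebra.TensorProduct.includeLeft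

variable (K H) in
/-- `h ↦ 1 ⊗ h`. -/
noncomputable def i2 : H →ₐ[K] H ⊗[K] H := Algebra.TensorProduct.includeRight

@[simp] lemma i1_apply (h : H) : i1 K H h = h ⊗ₜ[K] 1 := rfl
@[simp] lemma i2_apply (h : H) : i2 K H h = 1 ⊗ₜ[K] h := rfl

lemma i1_conv_i2 : toConv (i1 K H).toLinearMap * toConv (i2 K H).toLinearMap =
    toConv (Bialgebra.comulAlgHom K H).toLinearMap := by
  ext x
  simp only [LinearMap.convMul_apply]
  simp [← (ℛ K x).eq]

lemma comul_antipode_conv_i1 :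
    toConv ((Bialgebra.comulAlgHom K H).toLinearMap ∘ₗ antipode K) * toConv (i1 K H).toLinearMap =
      toConv ((i2 K H).toLinearMap ∘ₗ antipode K) := by
  have h := antipode_conv (Bialgebra.comulAlgHom K H)
  rw [← i1_conv_i2, ← mul_assoc] at h
  exact left_inv_eq_right_inv h (conv_antipode (i2 K H))

lemma comul_antipode (x : H) : comul (R := K) (antipode K x) =
    TensorProduct.map (antipode K) (antipode K) (TensorProduct.comm K H H (comul x)) := by
  have h : toConv ((Bialgebra.comulAlgHom K H).toLinearMap ∘ₗ antipode K) =
      toConv ((i2 K H).toLinearMap ∘ₗ antipode K) * toConv ((i1 K H).toLinearMap ∘ₗ antipode K) := by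
    rw [← comul_antipode_conv_i1, mul_assoc, conv_antipode, mul_one]
  have h3 := congrArg (fun z => z.ofConv x) h
  simp only [LinearMap.convMul_apply] at h3
  simpa [← (ℛ K x).eq] using h3

variable (K H) in
/-- `Φ (h ⊗ h') = (h ⊗ 1) Δ(h')`. -/
noncomputable def Phi : H ⊗[K] H →ₗ[K] H ⊗[K] H :=
  LinearMap.mul' K (H ⊗[K] H) ∘ₗ TensorProduct.map (i1 K H).toLinearMap comul

@[simp] lemma Phi_tmul (a b : H) : Phi K H (a ⊗ₜ b) = (a ⊗ₜ 1) * comul b := by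
  simp [Phi]

/-- The coordinate form of `P_L`. -/
noncomputable def Q : H ⊗[K] H →ₗ[K] H ⊗[K] H :=
  (i2 K H).toLinearMap ∘ₗ LinearMap.mul' K H ∘ₗ LinearMap.rTensor H (antipode K)

@[simp] lemma Q_tmul (a b : H) : Q (a ⊗ₜ[K] b) = 1 ⊗ₜ (antipode K a * b) := by
  simp [Q]

lemma Phi_injective : Function.Injective (Phi K H) := by
  let g : WithConv (H →ₗ[K] H ⊗[K] H) :=
    toConv ((i1 K H).toLinearMap ∘ₗ antipode K) * toConv (i2 K H).toLinearMap
  let Psi : H ⊗[K] H →ₗ[K] H ⊗[K] H :=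
    LinearMap.mul' K (H ⊗[K] H) ∘ₗ TensorProduct.map (i1 K H).toLinearMap g.ofConv
  have h1 : toConv (i1 K H).toLinearMap * g = toConv (i2 K H).toLinearMap := by
    rw [← mul_assoc, conv_antipode, one_mul]
  have h2 (b : H) : Psi (comul b) = 1 ⊗ₜ b := by
    have h3 := congrArg (fun z => z.ofConv b) h1
    simp only [LinearMap.convMul_apply] at h3
    exact h3
  have h4 (a : H) (z : H ⊗[K] H) : Psi ((a ⊗ₜ 1) * z) = (a ⊗ₜ 1) * Psi z := by
    induction z with
    | zero => simp
    | add x y hx hy => simp [mul_add, hx, hy]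
    | tmul x y =>
      have (z : H ⊗[K] H) : ((a * x) ⊗ₜ[K] (1 : H)) * z =
          (a ⊗ₜ[K] (1 : H)) * ((x ⊗ₜ[K] (1 : H)) * z) := by
        rw [← mul_assoc]; simp
      simp [Psi, this]
  have h5 : Function.LeftInverse Psi (Phi K H) := by
    intro z
    induction z with
    | zero => simp
    | add x y hx hy => simp [hx, hy]
    | tmul x y => simp [h4, h2]
  exact h5.injective

/-- `∑ (b₁ · c ⊗ 1) Δ(b₂) = Δ(b) (c ⊗ 1)`. -/
lemma ad_comul (b c : H) :
    LinearMap.mul' K (H ⊗[K] H) (TensorProduct.map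
      ((i1 K H).toLinearMap ∘ₗ adjointAction K H ∘ₗ (TensorProduct.mk K H H).flip c)
      comul (comul b)) = comul b * (c ⊗ₜ 1) := by
  have had : toConv ((i1 K H).toLinearMap ∘ₗ adjointAction K H ∘ₗ (TensorProduct.mk K H H).flip c) =
      toConv (i1 K H).toLinearMap *
        toConv (LinearMap.mulLeft K (c ⊗ₜ[K] (1 : H)) ∘ₗ (i1 K H).toLinearMap ∘ₗ antipode K) := by
    ext x
    simp only [LinearMap.convMul_apply]
    simp [adjointAction, ← (ℛ K x).eq, TensorProduct.sum_tmul]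
  have hL (f g : H →ₗ[K] H ⊗[K] H) (d : H ⊗[K] H) :
      toConv (LinearMap.mulLeft K d ∘ₗ f) * toConv g =
        toConv (LinearMap.mulLeft K d ∘ₗ (toConv f * toConv g).ofConv) := by
    ext x
    simp only [LinearMap.convMul_apply, LinearMap.comp_apply]
    simp [← (ℛ K x).eq, Finset.mul_sum, mul_assoc]
  have h : toConv ((i1 K H).toLinearMap ∘ₗ adjointAction K H ∘ₗ (TensorProduct.mk K H H).flip c) *
      toConv (Bialgebra.comulAlgHom K H).toLinearMap =
      toConv (i1 K H).toLinearMap *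
        toConv (LinearMap.mulLeft K (c ⊗ₜ[K] (1 : H)) ∘ₗ (i2 K H).toLinearMap) := by
    rw [had, ← i1_conv_i2, mul_assoc, hL]
    have := antipode_conv (i1 K H)
    change _ * toConv (_ ∘ₗ (_ * (toConv (i1 K H).toLinearMap * toConv (i2 K H).toLinearMap)).ofConv) = _
    rw [← mul_assoc (toConv ((i1 K H).toLinearMap ∘ₗ antipode K)), this, one_mul]
  have h3 := congrArg (fun z => z.ofConv b) h
  simp only [LinearMap.convMul_apply] at h3
  refine h3.trans ?_
  simp [← (ℛ K b).eq, Finset.sum_mul]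

lemma Phi_mul (x y : H ⊗[K] H) : Phi K H (adSmashMul K H (x ⊗ₜ y)) = Phi K H x * Phi K H y := by
  induction x with
  | zero => simp
  | add x x' hx hx' => simp [TensorProduct.add_tmul, hx, hx', add_mul]
  | tmul a b =>
    induction y with
    | zero => simp
    | add y y' hy hy' => simp only [TensorProduct.tmul_add, map_add, hy, hy', mul_add]
    | tmul c d =>
      have h := ad_comul (K := K) b c
      rw [Phi_tmul, Phi_tmul, mul_assoc, ← mul_assoc (comul b), ← h]
      have e (u v : H) (z : H ⊗[K] H) : ((u * v) ⊗ₜ[K] (1 : H)) * z =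
          (u ⊗ₜ[K] (1 : H)) * ((v ⊗ₜ[K] (1 : H)) * z) := by
        rw [← mul_assoc]; simp
      simp [adSmashMul, ← (ℛ K b).eq, TensorProduct.tmul_sum, TensorProduct.sum_tmul,
        Finset.mul_sum, Finset.sum_mul, e, mul_assoc]

variable (K H) in
/-- The operator `P_L`. -/
noncomputable def PLmap : H ⊗[K] H →ₗ[K] H ⊗[K] H :=
      (LinearMap.lTensor H (LinearMap.mul' K H)) ∘ₗ
      (TensorProduct.leftComm K H H H).toLinearMap ∘ₗ
      (LinearMap.lTensor H
        ((LinearMap.rTensor H (adjointAction K H)) ∘ₗ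
          (TensorProduct.assoc K H H H).symm.toLinearMap)) ∘ₗ
      (TensorProduct.map
        (antipode (R := K) (A := H) ∘ₗ LinearMap.mul' K H)
        (LinearMap.rTensor (H ⊗[K] H)
          (antipode (R := K) (A := H) ∘ₗ LinearMap.mul' K H))) ∘ₗ
      (LinearMap.lTensor (H ⊗[K] H)
        (TensorProduct.tensorTensorTensorComm K H H H H).toLinearMap) ∘ₗ
      (TensorProduct.tensorTensorTensorComm K H (H ⊗[K] H) H (H ⊗[K] H)).toLinearMap ∘ₗ
      (TensorProduct.map
        ((LinearMap.lTensor H (Coalgebra.comul (R := K) (A := H))) ∘ₗ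
          Coalgebra.comul)
        ((LinearMap.lTensor H (Coalgebra.comul (R := K) (A := H))) ∘ₗ
          Coalgebra.comul))

lemma PLmap_tmul (a b : H) : PLmap K H (a ⊗ₜ b) =
    ∑ i ∈ (ℛ K a).index, ∑ j ∈ (ℛ K b).index,
      adSmashMul K H ((1 ⊗ₜ antipode K ((ℛ K a).left i * (ℛ K b).left j)) ⊗ₜ
        ((ℛ K a).right i ⊗ₜ (ℛ K b).right j)) := by
  simp only [PLmap, LinearMap.comp_apply, TensorProduct.map_tmul]
  rw [← Coalgebra.coassoc_apply, ← Coalgebra.coassoc_apply, ← (ℛ K a).eq, ← (ℛ K b).eq]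
  simp only [map_sum, LinearMap.rTensor_tmul, TensorProduct.sum_tmul, TensorProduct.tmul_sum]
  rw [Finset.sum_comm]
  refine Finset.sum_congr rfl fun i _ => Finset.sum_congr rfl fun j _ => ?_
  generalize (ℛ K a).left i = l
  generalize (ℛ K a).right i = r
  generalize (ℛ K b).left j = l'
  generalize (ℛ K b).right j = r'
  simp only [adSmashMul, LinearMap.comp_apply, LinearMap.rTensor_tmul, LinearMap.lTensor_tmul]
  rw [comul_antipode, Bialgebra.comul_mul, ← (ℛ K l).eq, ← (ℛ K l').eq]
  simp [TensorProduct.sum_tmul, TensorProduct.tmul_sum, Finset.sum_mul, Finset.mul_sum]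

/-- `∑ Δ(S(y₁)) (y₂ ⊗ 1) = 1 ⊗ S(y)`. -/
lemma key (y : H) :
    LinearMap.mul' K (H ⊗[K] H) (TensorProduct.map (comul ∘ₗ antipode K) (i1 K H).toLinearMap
      (comul y)) = 1 ⊗ₜ antipode K y := by
  have h3 := congrArg (fun z => z.ofConv y) (comul_antipode_conv_i1 (K := K) (H := H))
  simp only [LinearMap.convMul_apply] at h3
  exact h3

lemma Phi_PL (x : H ⊗[K] H) : Phi K H (PLmap K H x) = Q (Phi K H x) := by
  induction x with
  | zero => simp
  | add x y hx hy => simp [hx, hy]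
  | tmul a b =>
    let B : H →ₗ[K] H ⊗[K] H →ₗ[K] H ⊗[K] H := (LinearMap.mul K (H ⊗[K] H)) ∘ₗ comul ∘ₗ antipode K
    -- the trilinear form `F (b₁ ⊗ (b₂ ⊗ b₃)) = ∑ ΔS(a₁ b₁) (a₂ b₂ ⊗ b₃)`
    let F : H ⊗[K] (H ⊗[K] H) →ₗ[K] H ⊗[K] H := ∑ i ∈ (ℛ K a).index,
      TensorProduct.lift ((LinearMap.mul K (H ⊗[K] H)) ∘ₗ
        (comul ∘ₗ antipode K ∘ₗ LinearMap.mulLeft K ((ℛ K a).left i))) ∘ₗ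
        LinearMap.lTensor H (LinearMap.mulLeft K ((ℛ K a).right i ⊗ₜ[K] (1 : H)))
    have h1 : Phi K H (PLmap K H (a ⊗ₜ b)) = F (comul.lTensor H (comul b)) := by
      rw [PLmap_tmul, ← (ℛ K b).eq]
      simp only [map_sum, Phi_mul, F, LinearMap.sum_apply, LinearMap.lTensor_tmul]
      rw [Finset.sum_comm]
      refine Finset.sum_congr rfl fun i _ => Finset.sum_congr rfl fun j _ => ?_
      simp [mul_assoc, ← Algebra.TensorProduct.one_def]
    have h2 (u v : H) : F (TensorProduct.assoc K H H H (comul u ⊗ₜ v)) =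
        1 ⊗ₜ (antipode K (a * u) * v) := by
      have hk := key (K := K) (a * u)
      have e : (1 : H) ⊗ₜ[K] (antipode K (a * u) * v) =
        ((1 : H) ⊗ₜ[K] (antipode K (a * u))) * (1 ⊗ₜ v) := by simp
      have e' (p q : H) : p ⊗ₜ[K] q = (p ⊗ₜ[K] 1) * (1 ⊗ₜ[K] q) := by simp
      rw [e, ← hk, Bialgebra.comul_mul, ← (ℛ K a).eq, ← (ℛ K u).eq]
      simp only [F, TensorProduct.sum_tmul, map_sum, Finset.sum_mul, Finset.mul_sum,
        LinearMap.sum_apply]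
      refine Finset.sum_congr rfl fun i _ => Finset.sum_congr rfl fun j _ => ?_
      simp [mul_assoc]
    rw [h1, ← Coalgebra.coassoc_apply, Phi_tmul, ← (ℛ K b).eq]
    simp [h2, Finset.mul_sum]

lemma Q_Q (x : H ⊗[K] H) : Q (Q x) = Q x := by
  induction x with
  | zero => simp
  | add x y hx hy => simp [hx, hy]
  | tmul a b => simp

lemma Q_mul (x y : H ⊗[K] H) : Q x * Q y = Q (x * Q y) := by
  induction x with
  | zero => simp
  | add x x' hx hx' => simp [hx, hx', add_mul]
  | tmul a b =>
    induction y with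
    | zero => simp
    | add y y' hy hy' => simp only [map_add, hy, hy', mul_add]
    | tmul c d => simp [mul_assoc]

lemma Q_mul' (x y : H ⊗[K] H) : Q (Q x * y) = Q (x * y) := by
  induction x with
  | zero => simp
  | add x x' hx hx' => simp [hx, hx', add_mul]
  | tmul a b =>
    induction y with
    | zero => simp
    | add y y' hy hy' => simp only [map_add, hy, hy', mul_add]
    | tmul c d => simp [mul_assoc, antipode_mul_antidistrib]

end PLAux

theorem adjoint_smashProduct_PL_isRotaBaxter_weight_neg_one
    (K : Type*) [Field K] [CharZero K]
    (H : Type*) [Ring H] [HopfAlgebra K H] :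
    -- P_L(h # h') = ∑ S(h₍₂₎h'₍₂₎)·h₍₃₎ # S(h₍₁₎h'₍₁₎)h'₍₃₎
    let PL : H ⊗[K] H →ₗ[K] H ⊗[K] H :=
      (LinearMap.lTensor H (LinearMap.mul' K H)) ∘ₗ
      (TensorProduct.leftComm K H H H).toLinearMap ∘ₗ
      (LinearMap.lTensor H
        ((LinearMap.rTensor H (adjointAction K H)) ∘ₗ
          (TensorProduct.assoc K H H H).symm.toLinearMap)) ∘ₗ
      (TensorProduct.map
        (antipode (R := K) (A := H) ∘ₗ LinearMap.mul' K H)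
        (LinearMap.rTensor (H ⊗[K] H)
          (antipode (R := K) (A := H) ∘ₗ LinearMap.mul' K H))) ∘ₗ
      (LinearMap.lTensor (H ⊗[K] H)
        (TensorProduct.tensorTensorTensorComm K H H H H).toLinearMap) ∘ₗ
      (TensorProduct.tensorTensorTensorComm K H (H ⊗[K] H) H (H ⊗[K] H)).toLinearMap ∘ₗ
      (TensorProduct.map
        ((LinearMap.lTensor H (Coalgebra.comul (R := K) (A := H))) ∘ₗ
          Coalgebra.comul)
        ((LinearMap.lTensor H (Coalgebra.comul (R := K) (A := H))) ∘ₗ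
          Coalgebra.comul))
    (PL ∘ₗ PL = PL) ∧
    (∀ x y : H ⊗[K] H,
      adSmashMul K H (PL x ⊗ₜ[K] PL y) =
        PL (adSmashMul K H (x ⊗ₜ[K] PL y)) +
        PL (adSmashMul K H (PL x ⊗ₜ[K] y)) +
        (-1 : K) • PL (adSmashMul K H (x ⊗ₜ[K] y))) := by
  intro PL
  have hPL (x : H ⊗[K] H) : PLAux.Phi K H (PL x) = PLAux.Q (PLAux.Phi K H x) := PLAux.Phi_PL x
  refine ⟨LinearMap.ext fun x => PLAux.Phi_injective ?_, fun x y => PLAux.Phi_injective ?_⟩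
  · rw [LinearMap.comp_apply, hPL, hPL, PLAux.Q_Q]
  · simp only [map_add, map_smul, hPL, PLAux.Phi_mul, PLAux.Q_mul, PLAux.Q_mul']
    simp
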